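/- Let 0 < a < 1/4. Then the function σ ↦ P(σ,a) has exactly one zero in the open interval (0, ∞), and this zero is simple; moreover, for σ < 0 one has P(σ,a) = 0 if and only if σ is a negative even integer, and each of these zeros is simple. -/

import Mathlib

open HurwitzZeta Complex

/-- `P(s,a) = Li_s(e^{2πia}) + Li_s(e^{2πi(1−a)})`. -/
noncomputable def Pf (a : ℝ) : ℂ → ℂ :=
  fun s => expZeta a s + expZeta (1 - a : ℝ) s

namespace PZeros

open Set Filter Topology MeasureTheory Asymptotics

lemma Pf_eq (a : ℝ) : Pf a = fun s => 2 * cosZeta a s := by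
  funext s
  have h : (((1 - a : ℝ) : ℝ) : UnitAddCircle) = -(a : UnitAddCircle) := by
    rw [sub_eq_neg_add, AddCircle.coe_add, AddCircle.coe_neg, AddCircle.coe_period, add_zero]
  rw [Pf, h, cosZeta_eq]
  ring

lemma coe_ne_zero (a : ℝ) (h0 : 0 < a) (h1 : a < 1) : (a : UnitAddCircle) ≠ 0 := by
  intro h
  rw [AddCircle.coe_eq_zero_iff] at h
  obtain ⟨n, hn⟩ := h
  simp only [zsmul_eq_mul, mul_one] at hn
  rw [← hn] at h0 h1
  have h0' : 0 < n := by exact_mod_cast h0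
  have h1' : n < 1 := by exact_mod_cast h1
  omega

/-- The kernel. -/
noncomputable def ker (c t : ℝ) : ℝ :=
  Real.exp (-t) * (c - Real.exp (-t)) / (1 - 2 * Real.exp (-t) * c + Real.exp (-t) ^ 2)

lemma ker_denom (c r : ℝ) : 1 - c ^ 2 ≤ 1 - 2 * r * c + r ^ 2 := by
  nlinarith [sq_nonneg (r - c)]

lemma ker_cont (c : ℝ) (hc : c ^ 2 < 1) : Continuous (ker c) := by
  unfold ker
  refine Continuous.div (by fun_prop) (by fun_prop) fun t => ?_
  have := ker_denom c (Real.exp (-t))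
  linarith

lemma ker_bound (c : ℝ) (hc0 : 0 < c) (hc : c ^ 2 < 1) (t : ℝ) (ht : 0 ≤ t) :
    |ker c t| ≤ (1 - c ^ 2)⁻¹ * Real.exp (-t) := by
  have h := ker_denom c (Real.exp (-t))
  have hr : 0 < Real.exp (-t) := Real.exp_pos _
  have hr1 : Real.exp (-t) ≤ 1 := Real.exp_le_one_iff.2 (by linarith)
  have hc1 : c < 1 := by nlinarith
  have hd : 0 < 1 - c ^ 2 := by linarith
  rw [ker, abs_div, abs_mul, abs_of_pos hr, abs_of_pos (lt_of_lt_of_le hd h),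
    div_le_iff₀ (lt_of_lt_of_le hd h)]
  have h2 : |c - Real.exp (-t)| ≤ 1 := by rw [abs_le]; constructor <;> linarith
  calc Real.exp (-t) * |c - Real.exp (-t)| ≤ Real.exp (-t) * 1 := by gcongr
    _ = (1 - c ^ 2)⁻¹ * Real.exp (-t) * (1 - c ^ 2) := by field_simp
    _ ≤ _ := by gcongr

lemma ker_hasSum (θ t : ℝ) (ht : 0 < t) (hc : Real.cos θ ^ 2 < 1) :
    HasSum (fun n : ℕ => Real.cos (θ * (n + 1)) * Real.exp (-(n + 1) * t))
      (ker (Real.cos θ) t) := by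
  set z : ℂ := cexp (-t + θ * I) with hz
  have hre : z.re = Real.exp (-t) * Real.cos θ := by simp [hz, Complex.exp_re]
  have him : z.im = Real.exp (-t) * Real.sin θ := by simp [hz, Complex.exp_im]
  have hnorm : ‖z‖ < 1 := by simp [hz, Complex.norm_exp, ht]
  have h := ((hasSum_geometric_of_norm_lt_one hnorm).mul_left z).mapL Complex.reCLM
  have hk : Complex.reCLM (z * (1 - z)⁻¹) = ker (Real.cos θ) t := by
    have hd := ker_denom (Real.cos θ) (Real.exp (-t))
    have hsc := Real.sin_sq_add_cos_sq θ
    simp only [Complex.reCLM_apply, Complex.mul_re, Complex.inv_re, Complex.inv_im, Complex.sub_re,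
      Complex.sub_im, Complex.one_re, Complex.one_im, Complex.normSq_apply, hre, him, ker]
    set r := Real.exp (-t)
    set c := Real.cos θ
    set s := Real.sin θ
    have e : (1 - r * c) * (1 - r * c) + (0 - r * s) * (0 - r * s) = 1 - 2 * r * c + r ^ 2 := by
      linear_combination r ^ 2 * hsc
    have hne : 1 - 2 * r * c + r ^ 2 ≠ 0 := by linarith
    rw [e]
    rw [mul_div_assoc', mul_div_assoc', ← sub_div]
    congr 1
    linear_combination (-r ^ 2) * hsc
  rw [hk] at h
  refine h.congr_fun fun n => ?_
  rw [← pow_succ', hz, ← Complex.exp_nat_mul, Complex.reCLM_apply, Complex.exp_re]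
  simp
  ring_nf

lemma ker_top (c : ℝ) (hc0 : 0 < c) (hc : c ^ 2 < 1) (b : ℝ) :
    (fun t => (ker c t : ℂ)) =O[atTop] (fun t : ℝ => t ^ (-b)) := by
  refine IsBigO.trans (g := fun t => Real.exp (-1 * t)) ?_
    (isLittleO_exp_neg_mul_rpow_atTop one_pos _).isBigO
  refine IsBigO.of_bound (1 - c ^ 2)⁻¹ ?_
  filter_upwards [eventually_ge_atTop 0] with t ht
  have := ker_bound c hc0 hc t ht
  simpa using this

lemma ker_bot (c : ℝ) (hc : c ^ 2 < 1) :
    (fun t => (ker c t : ℂ)) =O[𝓝[>] 0] (fun t : ℝ => t ^ (-(0 : ℝ))) := by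
  simp only [neg_zero, Real.rpow_zero]
  have : Continuous fun t => (ker c t : ℂ) := Complex.continuous_ofReal.comp (ker_cont c hc)
  exact (this.continuousAt.tendsto.mono_left nhdsWithin_le_nhds).isBigO_one ℝ

lemma ker_loc (c : ℝ) (hc : c ^ 2 < 1) :
    LocallyIntegrableOn (fun t => (ker c t : ℂ)) (Ioi 0) := by
  have : Continuous fun t => (ker c t : ℂ) := Complex.continuous_ofReal.comp (ker_cont c hc)
  exact this.locallyIntegrable.locallyIntegrableOn _

lemma ker_mellin_conv (c : ℝ) (hc0 : 0 < c) (hc : c ^ 2 < 1) (s : ℂ) (hs : 0 < s.re) :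
    MellinConvergent (fun t => (ker c t : ℂ)) s :=
  mellinConvergent_of_isBigO_rpow (ker_loc c hc) (ker_top c hc0 hc (s.re + 1)) (by linarith)
    (ker_bot c hc) hs

lemma ker_mellin_deriv (c : ℝ) (hc0 : 0 < c) (hc : c ^ 2 < 1) (s : ℂ) (hs : 0 < s.re) :
    MellinConvergent (fun t => Real.log t • (ker c t : ℂ)) s ∧
      HasDerivAt (mellin (fun t => (ker c t : ℂ)))
        (mellin (fun t => Real.log t • (ker c t : ℂ)) s) s :=
  mellin_hasDerivAt_of_isBigO_rpow (ker_loc c hc) (ker_top c hc0 hc (s.re + 1)) (by linarith)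
    (ker_bot c hc) hs

lemma mellin_eq_of_one_lt (a : ℝ) (hc : Real.cos (2 * Real.pi * a) ^ 2 < 1) (s : ℂ)
    (hs : 1 < s.re) :
    mellin (fun t => (ker (Real.cos (2 * Real.pi * a)) t : ℂ)) s =
      Complex.Gamma s * cosZeta a s := by
  have h1 := hasSum_mellin (a := fun n : ℕ => (Real.cos (2 * Real.pi * a * (n + 1)) : ℂ))
    (p := fun n : ℕ => (n + 1 : ℝ)) (F := fun t => (ker (Real.cos (2 * Real.pi * a)) t : ℂ))
    (s := s) (fun n => Or.inr (by positivity)) (by linarith) ?_ ?_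
  · have h2 := ((hasSum_nat_add_iff' 1).2 (hasSum_nat_cosZeta a hs)).mul_left (Complex.Gamma s)
    have hs0 : s ≠ 0 := by rintro rfl; simp at hs; linarith
    refine h1.unique ?_
    simp [Complex.zero_cpow hs0] at h2
    refine h2.congr_fun fun n => ?_
    push_cast
    ring
  · intro t ht
    have := ker_hasSum (2 * Real.pi * a) t ht hc
    have := (Complex.hasSum_ofReal).2 this
    refine this.congr_fun fun n => ?_
    push_cast
    rfl
  · have h := ((summable_nat_add_iff 1).2 (Real.summable_one_div_nat_rpow.2 hs))
    refine Summable.of_nonneg_of_le (fun n => by positivity) (fun n => ?_) h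
    push_cast
    gcongr
    have := Real.abs_cos_le_one (2 * Real.pi * a * (n + 1))
    rw [← Real.norm_eq_abs, ← Complex.norm_real] at this
    simpa using this

lemma mellin_eq (a : ℝ) (h0 : 0 < a) (h1 : a < 1) (hc0 : 0 < Real.cos (2 * Real.pi * a))
    (hc : Real.cos (2 * Real.pi * a) ^ 2 < 1) (s : ℂ) (hs : 0 < s.re) :
    mellin (fun t => (ker (Real.cos (2 * Real.pi * a)) t : ℂ)) s =
      Complex.Gamma s * cosZeta a s := by
  have hopen : IsOpen {s : ℂ | 0 < s.re} := isOpen_lt continuous_const Complex.continuous_re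
  have hopen1 : IsOpen {s : ℂ | 1 < s.re} := isOpen_lt continuous_const Complex.continuous_re
  have hA : AnalyticOnNhd ℂ (mellin (fun t => (ker (Real.cos (2 * Real.pi * a)) t : ℂ)))
      {s : ℂ | 0 < s.re} := by
    refine DifferentiableOn.analyticOnNhd (fun z hz => ?_) hopen
    exact (ker_mellin_deriv _ hc0 hc z hz).2.differentiableAt.differentiableWithinAt
  have hB : AnalyticOnNhd ℂ (fun s => Complex.Gamma s * cosZeta a s) {s : ℂ | 0 < s.re} := by
    refine DifferentiableOn.analyticOnNhd (fun z hz => ?_) hopen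
    refine DifferentiableAt.differentiableWithinAt (DifferentiableAt.mul ?_ ?_)
    · refine Complex.differentiableAt_Gamma _ fun m hm => ?_
      simp [hm] at hz
      linarith [(Nat.cast_nonneg m : (0 : ℝ) ≤ m)]
    · exact differentiable_cosZeta_of_ne_zero (coe_ne_zero a h0 h1) z
  have hconn : IsPreconnected {s : ℂ | 0 < s.re} := (convex_halfSpace_re_gt 0).isPreconnected
  refine hA.eqOn_of_preconnected_of_eventuallyEq hB hconn (z₀ := 2) (by simp) ?_ hs
  filter_upwards [hopen1.mem_nhds (show (2 : ℂ) ∈ {s : ℂ | 1 < s.re} by simp)] with z hz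
  exact mellin_eq_of_one_lt a hc z hz

lemma mellin_real (h : ℝ → ℝ) (σ : ℝ) :
    mellin (fun t => (h t : ℂ)) σ = ((∫ t in Ioi (0 : ℝ), t ^ (σ - 1) * h t : ℝ) : ℂ) := by
  refine Eq.trans ?_ (integral_ofReal (𝕜 := ℂ))
  rw [mellin]
  refine setIntegral_congr_fun measurableSet_Ioi fun t ht => ?_
  have ht' : (0 : ℝ) ≤ t := le_of_lt ht
  simp [Complex.ofReal_cpow ht']

lemma conv_real (h : ℝ → ℝ) (σ : ℝ) (H : MellinConvergent (fun t => (h t : ℂ)) σ) :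
    IntegrableOn (fun t : ℝ => t ^ (σ - 1) * h t) (Ioi 0) := by
  have := Integrable.re H
  refine IntegrableOn.congr_fun this (fun t ht => ?_) measurableSet_Ioi
  have ht' : (0 : ℝ) ≤ t := le_of_lt ht
  have e : (t : ℂ) ^ ((σ : ℂ) - 1) = ((t ^ (σ - 1) : ℝ) : ℂ) := by
    rw [Complex.ofReal_cpow ht']; simp
  simp only [smul_eq_mul, e, ← Complex.ofReal_mul]
  simp

lemma ker_sign (c t : ℝ) (hc0 : 0 < c) (hc1 : c < 1) (ht : 0 < t) (hne : t ≠ -Real.log c) :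
    0 < (Real.log t - Real.log (-Real.log c)) * ker c t := by
  have hx : 0 < -Real.log c := by linarith [Real.log_neg hc0 hc1]
  have hr : 0 < Real.exp (-t) := Real.exp_pos _
  have hd : 0 < 1 - 2 * Real.exp (-t) * c + Real.exp (-t) ^ 2 := by
    have := ker_denom c (Real.exp (-t))
    nlinarith
  unfold ker
  rcases lt_or_gt_of_ne hne with h | h
  · have h1 := Real.log_lt_log ht h
    have h2 : c < Real.exp (-t) := by rw [← Real.log_lt_iff_lt_exp hc0]; linarith
    refine mul_pos_of_neg_of_neg (by linarith) (div_neg_of_neg_of_pos ?_ hd)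
    exact mul_neg_of_pos_of_neg hr (by linarith)
  · have h1 := Real.log_lt_log hx h
    have h2 : Real.exp (-t) < c := by rw [← Real.lt_log_iff_exp_lt hc0]; linarith
    exact mul_pos (by linarith) (div_pos (mul_pos hr (by linarith)) hd)

lemma key_ineq (c : ℝ) (hc0 : 0 < c) (hc1 : c < 1) (σ : ℝ) (hσ : 0 < σ) :
    Real.log (-Real.log c) * (∫ t in Ioi (0 : ℝ), t ^ (σ - 1) * ker c t) <
      ∫ t in Ioi (0 : ℝ), t ^ (σ - 1) * (Real.log t * ker c t) := by
  have hc : c ^ 2 < 1 := by nlinarith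
  have I1 := conv_real _ σ (ker_mellin_conv c hc0 hc σ (by simpa using hσ))
  have I2 := conv_real (fun t => Real.log t * ker c t) σ
    (by simpa using (ker_mellin_deriv c hc0 hc σ (by simpa using hσ)).1)
  have hx : 0 < -Real.log c := by linarith [Real.log_neg hc0 hc1]
  rw [← sub_pos, ← integral_const_mul, ← integral_sub I2 (I1.const_mul _)]
  have hpos : ∀ t : ℝ, 0 < t → t ≠ -Real.log c → 0 < t ^ (σ - 1) * (Real.log t * ker c t) -
      Real.log (-Real.log c) * (t ^ (σ - 1) * ker c t) := by
    intro t ht hne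
    have := mul_pos (Real.rpow_pos_of_pos ht (σ - 1)) (ker_sign c t hc0 hc1 ht hne)
    linarith
  rw [setIntegral_pos_iff_support_of_nonneg_ae]
  · refine lt_of_lt_of_le ?_ (measure_mono (s := Ioi (-Real.log c)) ?_)
    · simp
    · intro t ht
      have ht0 : 0 < t := hx.trans ht
      exact ⟨(hpos t ht0 (ne_of_gt ht)).ne', ht0⟩
  · filter_upwards [ae_restrict_mem measurableSet_Ioi] with t ht
    by_cases hne : t = -Real.log c
    · rw [hne]; simp; apply le_of_eq; ring
    · exact (hpos t ht hne).le
  · exact I2.sub (I1.const_mul _)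

lemma hurwitz_ne (a : ℝ) (h0 : 0 < a) (s : ℝ) (hs : 1 < s) :
    hurwitzZetaEven a (s : ℂ) ≠ 0 := by
  have h := hasSum_int_hurwitzZetaEven a (s := s) (by simpa using hs)
  have h2 := h.mapL Complex.reCLM
  have h3 : HasSum (fun n : ℤ => 1 / |(n : ℝ) + a| ^ s / 2) (hurwitzZetaEven a (s : ℂ)).re := by
    refine h2.congr_fun fun n => ?_
    have e : ((|(n : ℝ) + a| : ℝ) : ℂ) ^ (s : ℂ) = ((|(n : ℝ) + a| ^ s : ℝ) : ℂ) := by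
      rw [Complex.ofReal_cpow (abs_nonneg _)]
    rw [e, Complex.reCLM_apply]
    norm_cast
  have h4 := le_hasSum h3 0 (fun n _ => by positivity)
  have h5 : 0 < 1 / |((0 : ℤ) : ℝ) + a| ^ s / 2 := by
    have : 0 < |((0 : ℤ) : ℝ) + a| := by simp [h0.ne']
    positivity
  intro h
  rw [h] at h4
  simp only [Complex.zero_re] at h4
  linarith

/-- The factor without real zeros. -/
noncomputable def Bf (a : ℝ) (z : ℂ) : ℂ :=
  2 * (2 * Real.pi) ^ (-(1 - z)) * Complex.Gamma (1 - z) * hurwitzZetaEven a (1 - z)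

lemma cosZeta_factor (a : ℝ) (z : ℂ) (hz : z.re < 0) :
    cosZeta a z = Bf a z * Complex.cos (Real.pi * (1 - z) / 2) := by
  have := cosZeta_one_sub a (s := 1 - z) (fun n hn => by
    have := congrArg Complex.re hn
    simp at this
    linarith [(Nat.cast_nonneg n : (0 : ℝ) ≤ n)])
  rw [sub_sub_cancel] at this
  rw [this, Bf]
  ring

lemma Bf_diff (a : ℝ) (z : ℂ) (hz : z.re < 0) : DifferentiableAt ℂ (Bf a) z := by
  unfold Bf
  have hpi : (2 * Real.pi : ℂ) ≠ 0 := by simp [Real.pi_ne_zero]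
  have hsub : DifferentiableAt ℂ (fun z : ℂ => 1 - z) z := by fun_prop
  refine DifferentiableAt.mul (DifferentiableAt.mul (DifferentiableAt.mul (by fun_prop) ?_) ?_) ?_
  · exact DifferentiableAt.const_cpow (by fun_prop) (Or.inl hpi)
  · refine DifferentiableAt.comp (g := Complex.Gamma) z (Complex.differentiableAt_Gamma _ fun m hm => ?_) hsub
    have := congrArg Complex.re hm
    simp at this
    linarith [(Nat.cast_nonneg m : (0 : ℝ) ≤ m)]
  · refine DifferentiableAt.comp (g := hurwitzZetaEven a) z (differentiableAt_hurwitzZetaEven _ fun hm => ?_) hsub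
    have := congrArg Complex.re hm
    simp at this
    linarith

lemma Bf_ne (a : ℝ) (h0 : 0 < a) (σ : ℝ) (hσ : σ < 0) : Bf a σ ≠ 0 := by
  have hpi : (2 * Real.pi : ℂ) ≠ 0 := by simp [Real.pi_ne_zero]
  unfold Bf
  refine mul_ne_zero (mul_ne_zero (mul_ne_zero two_ne_zero ?_) ?_) ?_
  · simp [Complex.cpow_eq_zero_iff, hpi]
  · exact Complex.Gamma_ne_zero_of_re_pos (by simp; linarith)
  · have := hurwitz_ne a h0 (1 - σ) (by linarith)
    simpa using this

lemma neg_simple (a : ℝ) (h0 : 0 < a) (σ : ℝ) (hσ : σ < 0) (hz : cosZeta a (σ : ℂ) = 0) :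
    deriv (cosZeta a) (σ : ℂ) ≠ 0 := by
  have hopen : IsOpen {s : ℂ | s.re < 0} := isOpen_lt Complex.continuous_re continuous_const
  have hev : cosZeta a =ᶠ[𝓝 (σ : ℂ)]
      fun z => Bf a z * Complex.cos (Real.pi * (1 - z) / 2) := by
    filter_upwards [hopen.mem_nhds (show (σ : ℂ) ∈ {s : ℂ | s.re < 0} by simpa using hσ)] with z hz
    exact cosZeta_factor a z hz
  rw [hev.deriv_eq]
  have hB := Bf_ne a h0 σ hσ
  rw [cosZeta_factor a σ (by simpa using hσ)] at hz
  have hcos := (mul_eq_zero.1 hz).resolve_left hB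
  have hd : HasDerivAt (fun z : ℂ => (Real.pi * (1 - z) / 2 : ℂ)) (Real.pi * (-1) / 2) σ := by
    simpa using (((hasDerivAt_id (σ : ℂ)).const_sub 1).const_mul (Real.pi : ℂ)).div_const 2
  have := (Bf_diff a σ (by simpa using hσ)).hasDerivAt.mul hd.ccos
  rw [HasDerivAt.deriv (f := fun z => Bf a z * Complex.cos (Real.pi * (1 - z) / 2)) this, hcos]
  have hsin : Complex.sin (Real.pi * (1 - σ) / 2) ≠ 0 := by
    intro h
    have := Complex.sin_sq_add_cos_sq (Real.pi * (1 - σ) / 2)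
    rw [h, hcos] at this
    simp at this
  simp [hB, hsin, Real.pi_ne_zero]

lemma neg_zeros (a : ℝ) (h0 : 0 < a) (σ : ℝ) (hσ : σ < 0) :
    cosZeta a (σ : ℂ) = 0 ↔ ∃ n : ℕ, σ = -(2 * (n + 1)) := by
  constructor
  · intro hz
    rw [cosZeta_factor a σ (by simpa using hσ)] at hz
    have hcos := (mul_eq_zero.1 hz).resolve_left (Bf_ne a h0 σ hσ)
    have hcos' : Real.cos (Real.pi * (1 - σ) / 2) = 0 := by exact_mod_cast hcos
    obtain ⟨k, hk⟩ := Real.cos_eq_zero_iff.1 hcos'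
    have hk' : σ = -(2 * k) := by
      have := Real.pi_pos
      have : Real.pi * (1 - σ) = Real.pi * (2 * k + 1) := by linarith
      have := mul_left_cancel₀ Real.pi_ne_zero this
      linarith
    have hkpos : 0 < k := by
      have : (0 : ℝ) < k := by linarith
      exact_mod_cast this
    refine ⟨(k - 1).toNat, ?_⟩
    have : (((k - 1).toNat : ℤ) : ℝ) = k - 1 := by
      rw [Int.toNat_of_nonneg (by omega)]; push_cast; rfl
    rw [Int.cast_natCast] at this
    rw [this, hk']
    ring
  · rintro ⟨n, rfl⟩
    have := cosZeta_neg_two_mul_nat_add_one (a : UnitAddCircle) n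
    rw [← this]
    congr 1
    push_cast
    ring

lemma mellin_log_real (c σ : ℝ) :
    mellin (fun t => Real.log t • (ker c t : ℂ)) σ =
      ((∫ t in Ioi (0 : ℝ), t ^ (σ - 1) * (Real.log t * ker c t) : ℝ) : ℂ) := by
  rw [← mellin_real (fun t => Real.log t * ker c t) σ]
  simp

/-- Real Mellin transform. -/
noncomputable def G (c σ : ℝ) : ℝ := ∫ t in Ioi (0 : ℝ), t ^ (σ - 1) * ker c t

/-- Derivative of the real Mellin transform. -/
noncomputable def G1 (c σ : ℝ) : ℝ := ∫ t in Ioi (0 : ℝ), t ^ (σ - 1) * (Real.log t * ker c t)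

lemma G_deriv (c : ℝ) (hc0 : 0 < c) (hc1 : c < 1) (σ : ℝ) (hσ : 0 < σ) :
    HasDerivAt (G c) (G1 c σ) σ := by
  have h := (ker_mellin_deriv c hc0 (by nlinarith) σ (by simpa using hσ)).2
  rw [mellin_log_real] at h
  have h := h.real_of_complex
  simp only [mellin_real, Complex.ofReal_re] at h
  exact h

lemma G_unique (c : ℝ) (hc0 : 0 < c) (hc1 : c < 1) (σ τ : ℝ) (hσ : 0 < σ) (hτ : 0 < τ)
    (h1 : G c σ = 0) (h2 : G c τ = 0) : σ = τ := by
  set l := Real.log (-Real.log c) with hl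
  have hd : ∀ x : ℝ, 0 < x → HasDerivAt (fun x => Real.exp (-l * x) * G c x)
      (Real.exp (-l * x) * (G1 c x - l * G c x)) x := by
    intro x hx
    have e : HasDerivAt (fun x => Real.exp (-l * x)) (Real.exp (-l * x) * -l) x := by
      simpa using ((hasDerivAt_id x).const_mul (-l)).exp
    refine (e.mul (G_deriv c hc0 hc1 x hx)).congr_deriv ?_
    ring
  have hm : StrictMonoOn (fun x => Real.exp (-l * x) * G c x) (Ioi 0) := by
    refine strictMonoOn_of_deriv_pos (convex_Ioi 0)
      (fun x hx => (hd x hx).continuousAt.continuousWithinAt) fun x hx => ?_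
    rw [interior_Ioi] at hx
    rw [(hd x hx).deriv]
    have := key_ineq c hc0 hc1 x hx
    exact mul_pos (Real.exp_pos _) (sub_pos.2 this)
  exact hm.injOn hσ hτ (by simp [h1, h2])

end PZeros

open PZeros Filter Topology

theorem P_real_zeros_lt_quarter (a : ℝ) (ha₀ : 0 < a) (ha₁ : a < 1 / 4) :
    (∃! σ : ℝ, 0 < σ ∧ Pf a (σ : ℂ) = 0) ∧
    (∀ σ : ℝ, 0 < σ → Pf a (σ : ℂ) = 0 → deriv (Pf a) (σ : ℂ) ≠ 0) ∧
    (∀ σ : ℝ, σ < 0 →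
      ((Pf a (σ : ℂ) = 0 ↔ ∃ n : ℕ, σ = -(2 * (n + 1))) ∧
       (Pf a (σ : ℂ) = 0 → deriv (Pf a) (σ : ℂ) ≠ 0))) := by
  have hdiff : Differentiable ℂ (cosZeta a) :=
    differentiable_cosZeta_of_ne_zero (coe_ne_zero a ha₀ (by linarith))
  have hderiv : ∀ s, deriv (Pf a) s = 2 * deriv (cosZeta a) s := by
    intro s
    rw [Pf_eq]
    exact deriv_const_mul _ (hdiff s)
  have hz : ∀ s, Pf a s = 0 ↔ cosZeta a s = 0 := by
    intro s
    simp [Pf_eq]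
  simp only [hderiv, hz, ne_eq, mul_eq_zero, two_ne_zero, false_or]
  have hpi := Real.pi_pos
  obtain ⟨c, hcdef⟩ : ∃ c, c = Real.cos (2 * Real.pi * a) := ⟨_, rfl⟩
  have hc0 : 0 < c := by
    rw [hcdef]
    exact Real.cos_pos_of_mem_Ioo ⟨by nlinarith, by nlinarith⟩
  have hc1 : c < 1 := by
    rw [hcdef, ← Real.cos_zero]
    exact Real.cos_lt_cos_of_nonneg_of_le_pi le_rfl (by nlinarith) (by positivity)
  have hc2 : c ^ 2 < 1 := by nlinarith
  have hM : ∀ s : ℂ, 0 < s.re →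
      mellin (fun t => (ker c t : ℂ)) s = Complex.Gamma s * cosZeta a s := by
    intro s hs
    rw [hcdef] at hc0 hc2 ⊢
    exact mellin_eq a ha₀ (by linarith) hc0 hc2 s hs
  have hG : ∀ σ : ℝ, 0 < σ → cosZeta a (σ : ℂ) = ((G c σ / Real.Gamma σ : ℝ) : ℂ) := by
    intro σ hσ
    have h := hM σ (by simpa using hσ)
    rw [mellin_real, Complex.Gamma_ofReal] at h
    have hg : (Real.Gamma σ : ℂ) ≠ 0 := by exact_mod_cast (Real.Gamma_pos_of_pos hσ).ne'
    rw [G, Complex.ofReal_div, h]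
    field_simp
  have hG0 : ∀ σ : ℝ, 0 < σ → cosZeta a (σ : ℂ) = 0 → G c σ = 0 := by
    intro σ hσ h
    rw [hG σ hσ] at h
    have h' : G c σ / Real.Gamma σ = 0 := by exact_mod_cast h
    exact (div_eq_zero_iff.1 h').resolve_right (Real.Gamma_pos_of_pos hσ).ne'
  refine ⟨?_, ?_, fun σ hσ => ⟨neg_zeros a ha₀ σ hσ, neg_simple a ha₀ σ hσ⟩⟩
  · refine existsUnique_of_exists_of_unique ?_ ?_
    · have hcont : Continuous fun x : ℝ => (cosZeta a (x : ℂ)).re :=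
        Complex.continuous_re.comp (hdiff.continuous.comp Complex.continuous_ofReal)
      have hlim : Tendsto (fun x : ℝ => (cosZeta a (x : ℂ)).re) atTop (𝓝 c) := by
        have hab : LSeries.abscissaOfAbsConv (fun n : ℕ => (Real.cos (2 * Real.pi * a * n) : ℂ))
            < ⊤ := by
          have := (LSeriesHasSum_cos a (s := 2) (by simp)).LSeriesSummable.abscissaOfAbsConv_le
          exact lt_of_le_of_lt this (EReal.coe_lt_top _)
        have h := LSeries.tendsto_atTop hab
        have h := (Complex.continuous_re.tendsto _).comp h
        have e : (fun x : ℝ => (cosZeta a (x : ℂ)).re) =ᶠ[atTop] Complex.re ∘ (fun x : ℝ =>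
            LSeries (fun n : ℕ => (Real.cos (2 * Real.pi * a * n) : ℂ)) x) := by
          filter_upwards [eventually_gt_atTop 1] with x hx
          simp only [Function.comp]
          rw [(LSeriesHasSum_cos a (s := x) (by simpa using hx)).LSeries_eq]
        refine Tendsto.congr' e.symm ?_
        rw [hcdef]
        convert h using 2
        rw [Complex.ofReal_re]
        simp
      obtain ⟨b, hb, hb0⟩ := ((hlim.eventually (lt_mem_nhds hc0)).and (eventually_gt_atTop 0)).exists
      have h0 : (cosZeta a ((0 : ℝ) : ℂ)).re < 0 := by
        rw [Complex.ofReal_zero, cosZeta_apply_zero]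
        norm_num
      obtain ⟨σ, hσ, hσz⟩ := intermediate_value_Ioo hb0.le hcont.continuousOn ⟨h0, hb⟩
      refine ⟨σ, hσ.1, ?_⟩
      simp only [hG σ hσ.1, Complex.ofReal_re] at hσz ⊢
      rw [hσz, Complex.ofReal_zero]
    · rintro σ τ ⟨hσ, hσz⟩ ⟨hτ, hτz⟩
      exact G_unique c hc0 hc1 σ τ hσ hτ (hG0 σ hσ hσz) (hG0 τ hτ hτz)
  · intro σ hσ hσz hd
    have hopen : IsOpen {s : ℂ | 0 < s.re} := isOpen_lt continuous_const Complex.continuous_re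
    have hev : mellin (fun t => (ker c t : ℂ)) =ᶠ[𝓝 (σ : ℂ)]
        fun s => Complex.Gamma s * cosZeta a s := by
      filter_upwards [hopen.mem_nhds (show (σ : ℂ) ∈ {s : ℂ | 0 < s.re} by simpa using hσ)]
        with z hz
      exact hM z hz
    have h1 := (ker_mellin_deriv c hc0 hc2 σ (by simpa using hσ)).2
    rw [mellin_log_real] at h1
    have h2 : HasDerivAt (fun s => Complex.Gamma s * cosZeta a s) _ (σ : ℂ) :=
      (Complex.differentiableAt_Gamma σ fun m hm => by
        have := congrArg Complex.re hm
        simp at this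
        linarith [(Nat.cast_nonneg m : (0 : ℝ) ≤ m)]).hasDerivAt.mul (hdiff σ).hasDerivAt
    have h3 := h1.unique (h2.congr_of_eventuallyEq hev)
    rw [hσz, hd] at h3
    simp only [mul_zero, add_zero] at h3
    have h4 := key_ineq c hc0 hc1 σ hσ
    have h5 := hG0 σ hσ hσz
    rw [G] at h5
    rw [h5, mul_zero] at h4
    have h6 := Complex.ofReal_eq_zero.1 h3
    linarith
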